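/- arXiv:2301.03739 — 6 statements merged into one kernel-verified Lean document; each statement's English description precedes it below -/
import Mathlib

section
/- Let R be a self-relation on a finite set X and R' a self-relation on a finite set Y, and suppose R and R' are conjugate: there is a bijection φ : X → Y with φ ∘ R = R' ∘ φ as relations from X to Y (where φ is identified with its graph relation). Let W : X → Y → Prop be the composite relation W x y ↔ R' (φ x) y (i.e. W = R' ∘ φ). Then K_R = K_W and L_{R'} = L_W; in particular the Dowker complexes of R and of R' arise as the two Dowker complexes of a single relation W. -/
/-- The Dowker complex `K_R` of a relation `R : X → Y → Prop`: the set of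
nonempty finite subsets `σ ⊆ X` such that there is a `y` with `R x y` for all `x ∈ σ`. -/
def dowkerK {X Y : Type*} (R : X → Y → Prop) : Set (Finset X) :=
  {σ | σ.Nonempty ∧ ∃ y, ∀ x ∈ σ, R x y}

/-- The Dowker complex `L_R` of a relation `R : X → Y → Prop`: the set of
nonempty finite subsets `τ ⊆ Y` such that there is an `x` with `R x y` for all `y ∈ τ`. -/
def dowkerL {X Y : Type*} (R : X → Y → Prop) : Set (Finset Y) :=
  {τ | τ.Nonempty ∧ ∃ x, ∀ y ∈ τ, R x y}

theorem stmt6 {X Y : Type*} [Fintype X] [Fintype Y]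
    (R : X → X → Prop) (R' : Y → Y → Prop) (φ : X → Y)
    (hφ : Function.Bijective φ)
    (hconj : ∀ x y, (∃ x', R x x' ∧ φ x' = y) ↔ R' (φ x) y) :
    dowkerK R = dowkerK (fun x y => R' (φ x) y) ∧
    dowkerL R' = dowkerL (fun x y => R' (φ x) y) := by
  have key : ∀ x x', R x x' ↔ R' (φ x) (φ x') := by
    intro x x'
    rw [← hconj]
    constructor
    · intro h
      exact ⟨x', h, rfl⟩
    · rintro ⟨z, hz, he⟩
      rwa [← hφ.1 he]
  constructor
  · ext σ
    simp only [dowkerK, Set.mem_setOf_eq, key]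
    rw [hφ.2.exists]
  · ext τ
    simp only [dowkerL, Set.mem_setOf_eq]
    rw [hφ.2.exists]
end

section
/- Let R be a self-relation on a finite set X with eventual period (j, p), i.e. j, p ≥ 1 and R^j = R^{j+p} as relations. If Dom R = X, then K_{R^j} = K_{R^{j+i}} for every i ∈ ℕ; if Im R = X, then L_{R^j} = L_{R^{j+i}} for every i ∈ ℕ. -/
/-- Composition of relations: `relComp R₁ R₂` is the paper's `R₂ ∘ R₁`,
i.e. `(R₂ ∘ R₁) x z ↔ ∃ y, R₁ x y ∧ R₂ y z`. -/
def relComp {X Y Z : Type*} (R₁ : X → Y → Prop) (R₂ : Y → Z → Prop) : X → Z → Prop :=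
  fun x z => ∃ y, R₁ x y ∧ R₂ y z

/-- Powers of a self-relation: `R^0` is equality and `R^(n+1) = R ∘ R^n`. -/
def relPow {X : Type*} (R : X → X → Prop) : ℕ → X → X → Prop
  | 0 => Eq
  | n + 1 => relComp (relPow R n) R

theorem relPow_succ_left {X : Type*} (R : X → X → Prop) (n : ℕ) :
    relPow R (n + 1) = relComp R (relPow R n) := by
  induction n with
  | zero =>
    funext x z
    simp [relPow, relComp]
  | succ n ih =>
    have h : relPow R (n + 1 + 1) = relComp (relPow R (n + 1)) R := rfl
    rw [h]
    conv_lhs => rw [ih]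
    funext x z
    apply propext
    constructor
    · rintro ⟨y, ⟨w, h1, h2⟩, h3⟩
      exact ⟨w, h1, y, h2, h3⟩
    · rintro ⟨w, h1, y, h2, h3⟩
      exact ⟨y, ⟨w, h1, h2⟩, h3⟩

theorem relPow_period {X : Type*} (R : X → X → Prop) (j p : ℕ)
    (hper : relPow R j = relPow R (j + p)) (m : ℕ) :
    relPow R (j + m) = relPow R (j + p + m) := by
  induction m with
  | zero => exact hper
  | succ m ih =>
    change relComp (relPow R (j + m)) R = relComp (relPow R (j + p + m)) R
    rw [ih]

theorem relPow_period_mul {X : Type*} (R : X → X → Prop) (j p : ℕ)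
    (hper : relPow R j = relPow R (j + p)) (k : ℕ) :
    relPow R j = relPow R (j + k * p) := by
  induction k with
  | zero => simp
  | succ k ih =>
    rw [ih, relPow_period R j p hper (k * p)]
    congr 1
    ring

theorem eq_of_mono_period {X : Type*} {α : Type*} (R : X → X → Prop) (j p : ℕ) (hp : 1 ≤ p)
    (hper : relPow R j = relPow R (j + p)) (F : (X → X → Prop) → Set α)
    (hF : ∀ n, F (relPow R n) ⊆ F (relPow R (n + 1))) (i : ℕ) :
    F (relPow R j) = F (relPow R (j + i)) := by
  have hm : Monotone (fun n => F (relPow R n)) := monotone_nat_of_le_succ hF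
  apply Set.Subset.antisymm
  · exact hm (Nat.le_add_right j i)
  · have h : F (relPow R (j + i)) ⊆ F (relPow R (j + i * p)) :=
      hm (Nat.add_le_add_left (Nat.le_mul_of_pos_right i hp) j)
    rwa [← relPow_period_mul R j p hper i] at h

theorem stmt9 {X : Type*} [Fintype X] (R : X → X → Prop) (j p : ℕ)
    (hj : 1 ≤ j) (hp : 1 ≤ p)
    (hper : relPow R j = relPow R (j + p)) :
    ((∀ x, ∃ y, R x y) → ∀ i : ℕ, dowkerK (relPow R j) = dowkerK (relPow R (j + i))) ∧
    ((∀ y, ∃ x, R x y) → ∀ i : ℕ, dowkerL (relPow R j) = dowkerL (relPow R (j + i))) := by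
  refine ⟨fun hd i => ?_, fun hi i => ?_⟩
  · refine eq_of_mono_period R j p hp hper dowkerK ?_ i
    rintro n σ ⟨hne, y, hy⟩
    obtain ⟨z, hz⟩ := hd y
    exact ⟨hne, z, fun x hx => ⟨y, hy x hx, hz⟩⟩
  · refine eq_of_mono_period R j p hp hper dowkerL ?_ i
    rintro n τ ⟨hne, x, hx⟩
    obtain ⟨w, hw⟩ := hi x
    refine ⟨hne, w, fun y hy => ?_⟩
    rw [relPow_succ_left]
    exact ⟨x, hw, hx y hy⟩
end

section
/- Let R₁ be a self-relation on a finite set X with Dom R₁ = X = Im R₁, and R₂ a self-relation on a finite set Y with Dom R₂ = Y = Im R₂. Suppose R₁^{j_p} = R₁^{j_p + p} and R₂^{j_q} = R₂^{j_q + q} with p, q ≥ 1 and j_p ≥ j_q ≥ 1. Suppose R₁ and R₂ are shift equivalent with lag l ≥ 1: there exist relations S : X → Y → Prop and T : Y → X → Prop with R₁ ∘ T = T ∘ R₂, S ∘ R₁ = R₂ ∘ S, T ∘ S = R₁^l and S ∘ T = R₂^l. Let W := S ∘ R₁^{j_p} : X → Y → Prop. Then K_{R₁^{j_p}} = K_W,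 L_{R₂^{j_p}} = L_W, and L_{R₂^{j_q}} = L_{R₂^{j_p}}; in particular the Dowker complexes K_{R₁^{j_p}} and L_{R₂^{j_q}} are the two Dowker complexes of the single relation W. -/
theorem relComp_assoc' {A B C D : Type*} (P : A → B → Prop) (Q : B → C → Prop)
    (R : C → D → Prop) : relComp (relComp P Q) R = relComp P (relComp Q R) := by
  funext a d
  apply propext
  constructor
  · rintro ⟨c, ⟨b, h, h'⟩, h''⟩
    exact ⟨b, h, c, h', h''⟩
  · rintro ⟨b, h, c, h', h''⟩
    exact ⟨c, ⟨b, h, h'⟩, h''⟩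

theorem relComp_eq' {A B : Type*} (P : A → B → Prop) : relComp P Eq = P := by
  funext a b
  simp [relComp]

theorem relPow_add' {A : Type*} (R : A → A → Prop) (m n : ℕ) :
    relPow R (m + n) = relComp (relPow R m) (relPow R n) := by
  induction n with
  | zero => exact (relComp_eq' _).symm
  | succ n ih =>
    change relComp (relPow R (m + n)) R = relComp (relPow R m) (relComp (relPow R n) R)
    rw [ih, relComp_assoc']

theorem relPow_dom {A : Type*} (R : A → A → Prop) (h : ∀ x, ∃ y, R x y) (n : ℕ) :
    ∀ x, ∃ y, relPow R n x y := by
  induction n with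
  | zero => exact fun x => ⟨x, rfl⟩
  | succ n ih =>
    intro x
    obtain ⟨y, hy⟩ := ih x
    obtain ⟨z, hz⟩ := h y
    exact ⟨z, y, hy, hz⟩

theorem relPow_im {A : Type*} (R : A → A → Prop) (h : ∀ y, ∃ x, R x y) (n : ℕ) :
    ∀ y, ∃ x, relPow R n x y := by
  induction n with
  | zero => exact fun x => ⟨x, rfl⟩
  | succ n ih =>
    intro z
    obtain ⟨y, hy⟩ := h z
    obtain ⟨x, hx⟩ := ih y
    exact ⟨x, y, hx, hy⟩

theorem dowkerK_sub {A B C : Type*} (P : A → B → Prop) (Q : B → C → Prop)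
    (h : ∀ x, ∃ y, Q x y) : dowkerK P ⊆ dowkerK (relComp P Q) := by
  rintro s ⟨hs, y, hy⟩
  obtain ⟨z, hz⟩ := h y
  exact ⟨hs, z, fun x hx => ⟨y, hy x hx, hz⟩⟩

theorem dowkerL_sub {A B C : Type*} (P : A → B → Prop) (Q : B → C → Prop)
    (h : ∀ y, ∃ x, P x y) : dowkerL Q ⊆ dowkerL (relComp P Q) := by
  rintro s ⟨hs, y, hy⟩
  obtain ⟨z, hz⟩ := h y
  exact ⟨hs, z, fun x hx => ⟨y, hz, hy x hx⟩⟩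

theorem relPow_per {A : Type*} (R : A → A → Prop) (j p : ℕ)
    (h : relPow R j = relPow R (j + p)) (k : ℕ) : relPow R (j + k * p) = relPow R j := by
  induction k with
  | zero => simp
  | succ k ih =>
    have e : j + (k + 1) * p = (j + p) + k * p := by ring
    rw [e, relPow_add', ← h, ← relPow_add', ih]

theorem dowkerK_pow_sub {A : Type*} (R : A → A → Prop) (hd : ∀ x, ∃ y, R x y) (j p : ℕ)
    (hp : 1 ≤ p) (h : relPow R j = relPow R (j + p)) (l : ℕ) :
    dowkerK (relPow R (j + l)) ⊆ dowkerK (relPow R j) := by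
  obtain ⟨m, hm⟩ := Nat.exists_eq_add_of_le (Nat.le_mul_of_pos_right l hp)
  have := dowkerK_sub (relPow R (j + l)) (relPow R m) (relPow_dom R hd m)
  rwa [← relPow_add', add_assoc, ← hm, relPow_per R j p h] at this

theorem dowkerL_pow_sub {A : Type*} (R : A → A → Prop) (hd : ∀ y, ∃ x, R x y) (j p : ℕ)
    (hp : 1 ≤ p) (h : relPow R j = relPow R (j + p)) (l : ℕ) :
    dowkerL (relPow R (j + l)) ⊆ dowkerL (relPow R j) := by
  obtain ⟨m, hm⟩ := Nat.exists_eq_add_of_le (Nat.le_mul_of_pos_right l hp)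
  have := dowkerL_sub (relPow R m) (relPow R (j + l)) (relPow_im R hd m)
  rwa [← relPow_add', add_comm m, add_assoc, ← hm, relPow_per R j p h] at this

theorem relPow_comm' {A B : Type*} (R : A → A → Prop) (Q : B → B → Prop) (S : A → B → Prop)
    (h : relComp R S = relComp S Q) (n : ℕ) :
    relComp (relPow R n) S = relComp S (relPow Q n) := by
  induction n with
  | zero =>
    funext a b
    simp [relComp, relPow]
  | succ n ih =>
    change relComp (relComp (relPow R n) R) S = relComp S (relComp (relPow Q n) Q)
    rw [relComp_assoc', h, ← relComp_assoc', ih, relComp_assoc']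

theorem stmt10 {X Y : Type*} [Fintype X] [Fintype Y]
    (R₁ : X → X → Prop) (R₂ : Y → Y → Prop)
    (hDom₁ : ∀ x, ∃ y, R₁ x y) (hIm₁ : ∀ y, ∃ x, R₁ x y)
    (hDom₂ : ∀ x, ∃ y, R₂ x y) (hIm₂ : ∀ y, ∃ x, R₂ x y)
    (jp jq p q l : ℕ) (hp : 1 ≤ p) (hq : 1 ≤ q) (hl : 1 ≤ l)
    (hjq : 1 ≤ jq) (hjpq : jq ≤ jp)
    (hper₁ : relPow R₁ jp = relPow R₁ (jp + p))
    (hper₂ : relPow R₂ jq = relPow R₂ (jq + q))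
    (S : X → Y → Prop) (T : Y → X → Prop)
    (h₁ : relComp T R₁ = relComp R₂ T)
    (h₂ : relComp R₁ S = relComp S R₂)
    (h₃ : relComp S T = relPow R₁ l)
    (h₄ : relComp T S = relPow R₂ l) :
    dowkerK (relPow R₁ jp) = dowkerK (relComp (relPow R₁ jp) S) ∧
    dowkerL (relPow R₂ jp) = dowkerL (relComp (relPow R₁ jp) S) ∧
    dowkerL (relPow R₂ jq) = dowkerL (relPow R₂ jp) := by
  have hSd : ∀ x, ∃ y, S x y := fun x => by
    obtain ⟨z, hz⟩ := relPow_dom R₁ hDom₁ l x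
    rw [← h₃] at hz
    exact ⟨_, hz.choose_spec.1⟩
  have hTi : ∀ x, ∃ y, T y x := fun x => by
    obtain ⟨z, hz⟩ := relPow_im R₁ hIm₁ l x
    rw [← h₃] at hz
    exact ⟨_, hz.choose_spec.2⟩
  have hTd : ∀ x, ∃ y, T x y := fun x => by
    obtain ⟨z, hz⟩ := relPow_dom R₂ hDom₂ l x
    rw [← h₄] at hz
    exact ⟨_, hz.choose_spec.1⟩
  have hSi : ∀ x, ∃ y, S y x := fun x => by
    obtain ⟨z, hz⟩ := relPow_im R₂ hIm₂ l x
    rw [← h₄] at hz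
    exact ⟨_, hz.choose_spec.2⟩
  obtain ⟨d, rfl⟩ := Nat.exists_eq_add_of_le hjpq
  have hper₂' : relPow R₂ (jq + d) = relPow R₂ (jq + d + q) := by
    rw [add_right_comm, relPow_add', hper₂, ← relPow_add']
  refine ⟨(dowkerK_sub _ _ hSd).antisymm ?_, ?_, ?_⟩
  · refine (dowkerK_sub _ _ hTd).trans ?_
    rw [relComp_assoc', h₃, ← relPow_add']
    exact dowkerK_pow_sub R₁ hDom₁ _ p hp hper₁ l
  · rw [relPow_comm' R₁ R₂ S h₂]
    refine (dowkerL_sub _ _ hSi).antisymm ((dowkerL_sub _ _ hTi).trans ?_)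
    rw [← relComp_assoc', h₄, ← relPow_add', add_comm l]
    exact dowkerL_pow_sub R₂ hIm₂ _ q hq hper₂' l
  · refine Set.Subset.antisymm ?_ (dowkerL_pow_sub R₂ hIm₂ _ q hq hper₂ d)
    rw [add_comm jq, relPow_add']
    exact dowkerL_sub _ _ (relPow_im R₂ hIm₂ d)
end

section
/- Let R be a self-relation on a finite set X with Dom R = X, and suppose R is acyclic. Let j ≥ 1 satisfy R^j = R^{j+1} (so R^j is the limit relation R^∞). Then every simplex of K_{R^j} is contained in a simplex determined by a minimum: for every σ ∈ K_{R^j} there exists z ∈ X such that z is a minimum of R^j (i.e. R^j z y implies y = z) and R^j x z holds for every x ∈ σ. -/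
theorem relPow_trans {X : Type*} (R : X → X → Prop) (m n : ℕ) (x y z : X)
    (h1 : relPow R m x y) (h2 : relPow R n y z) : relPow R (m + n) x z := by
  induction n generalizing z with
  | zero =>
    have h : y = z := h2
    subst h
    exact h1
  | succ n ih =>
    obtain ⟨w, hw, hr⟩ := h2
    exact ⟨w, ih w hw, hr⟩

theorem relPow_serial {X : Type*} (R : X → X → Prop) (hDom : ∀ x, ∃ y, R x y)
    (n : ℕ) (x : X) : ∃ y, relPow R n x y := by
  induction n with
  | zero => exact ⟨x, rfl⟩
  | succ n ih =>
    obtain ⟨y, hy⟩ := ih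
    obtain ⟨z, hz⟩ := hDom y
    exact ⟨z, y, hy, hz⟩

theorem relPow_stab {X : Type*} (R : X → X → Prop) (j : ℕ)
    (hstab : relPow R j = relPow R (j + 1)) (k : ℕ) : relPow R (j + k) = relPow R j := by
  induction k with
  | zero => rfl
  | succ k ih =>
    have h : relPow R (j + (k + 1)) = relComp (relPow R (j + k)) R := rfl
    rw [h, ih]
    exact hstab.symm

theorem stmt11 {X : Type*} [Fintype X] (R : X → X → Prop)
    (hDom : ∀ x, ∃ y, R x y)
    (hacyclic : ∀ x y, ∀ m n : ℕ, 1 ≤ m → 1 ≤ n →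
      relPow R m x y → relPow R n y x → x = y)
    (j : ℕ) (hj : 1 ≤ j) (hstab : relPow R j = relPow R (j + 1)) :
    ∀ σ ∈ dowkerK (relPow R j), ∃ z : X,
      (∀ y, relPow R j z y → y = z) ∧ ∀ x ∈ σ, relPow R j x z := by
  rintro σ ⟨-, y, hy⟩
  have trans : ∀ a b c, relPow R j a b → relPow R j b c → relPow R j a c := by
    intro a b c h1 h2
    have h := relPow_trans R j j a b c h1 h2
    rwa [relPow_stab R j hstab j] at h
  let r : X → X → Prop := fun b a => relPow R j a b ∧ a ≠ b
  haveI : IsTrans X r := ⟨by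
    rintro a b c ⟨h1, n1⟩ ⟨h2, n2⟩
    refine ⟨trans _ _ _ h2 h1, ?_⟩
    rintro rfl
    exact n1 (hacyclic _ _ j j hj hj h1 h2)⟩
  haveI : Std.Irrefl r := ⟨fun a h => h.2 rfl⟩
  have wf : WellFounded r := Finite.wellFounded_of_trans_of_irrefl r
  obtain ⟨z, hz, hmin⟩ := wf.has_min {z | relPow R j y z} (relPow_serial R hDom j y)
  refine ⟨z, fun w hw => ?_, fun x hx => trans _ _ _ (hy x hx) hz⟩
  by_contra hne
  exact hmin w (trans _ _ _ hz hw) ⟨hw, fun h => hne h.symm⟩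
end

section
/- Let R be a strongly connected self-relation on a finite nonempty set X, let j be the least positive integer such that R^j = R^{j+p} for some p ≥ 1, and let q ≥ 1 be the greatest common divisor of the cycle lengths of R (i.e. q divides every n ≥ 1 for which there exists x with R^n x x, and every d with this property divides q). Define x ∼_q y to mean that every walk from x to y has length divisible by q, i.e. for all n, R^n x y implies q ∣ n. Then: (i) for all x, y ∈ X, x ∼_q y holds if and only if x and y are edge-connected in K_{R^j}, i.e. ReflTransGen E x y where E a b ↔ ∃ z, R^j a z ∧ R^j b z; and (ii) there are exactly q classes: there exists a surjection f : X → Fin q such that f x = f y if and only if x ∼_q y. -/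
theorem relPow_add'_s14 {X : Type*} {R : X → X → Prop} {m : ℕ} {x y : X} (h : relPow R m x y) :
    ∀ {n : ℕ} {z : X}, relPow R n y z → relPow R (m + n) x z := by
  intro n
  induction n with
  | zero => intro z hz; cases hz; exact h
  | succ n ih =>
    rintro z ⟨w, hw, hz⟩
    exact ⟨w, ih hw, hz⟩

theorem relPow_split' {X : Type*} {R : X → X → Prop} {m : ℕ} {x : X} :
    ∀ {n : ℕ} {z : X}, relPow R (m + n) x z → ∃ y, relPow R m x y ∧ relPow R n y z := by
  intro n
  induction n with
  | zero => intro z hz; exact ⟨z, hz, rfl⟩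
  | succ n ih =>
    rintro z ⟨w, hw, hz⟩
    obtain ⟨y, h1, h2⟩ := ih hw
    exact ⟨y, h1, w, h2, hz⟩

theorem relPow_periodic' {X : Type*} {R : X → X → Prop} {j p : ℕ}
    (h : relPow R j = relPow R (j + p)) (k : ℕ) {x y : X}
    (hxy : relPow R (j + k * p) x y) : relPow R j x y := by
  induction k generalizing x y with
  | zero => simpa using hxy
  | succ k ih =>
    have e : j + (k + 1) * p = (j + p) + k * p := by ring
    rw [e] at hxy
    obtain ⟨w, h1, h2⟩ := relPow_split' hxy
    rw [← h] at h1
    exact ih (relPow_add'_s14 h1 h2)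

theorem relPow_total' {X : Type*} {R : X → X → Prop}
    (hsc : ∀ x y : X, ∃ n : ℕ, 1 ≤ n ∧ relPow R n x y) (k : ℕ) :
    ∀ x, ∃ y, relPow R k x y := by
  induction k with
  | zero => intro x; exact ⟨x, rfl⟩
  | succ k ih =>
    intro x
    obtain ⟨y, hy⟩ := ih x
    obtain ⟨n, hn, hyy⟩ := hsc y y
    obtain ⟨m, rfl⟩ := Nat.exists_eq_add_of_le hn
    obtain ⟨w, h1, -⟩ := relPow_split' hyy
    exact ⟨w, relPow_add'_s14 hy h1⟩

/-- Differences of lengths of closed walks at `y`. -/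
def cycDiff' {X : Type*} (R : X → X → Prop) (y : X) : AddSubgroup ℤ where
  carrier := {z | ∃ s t : ℕ, relPow R s y y ∧ relPow R t y y ∧ z = (t : ℤ) - s}
  zero_mem' := ⟨0, 0, rfl, rfl, by simp⟩
  add_mem' := by
    rintro a b ⟨s, t, hs, ht, rfl⟩ ⟨s', t', hs', ht', rfl⟩
    exact ⟨s + s', t + t', relPow_add'_s14 hs hs', relPow_add'_s14 ht ht', by push_cast; ring⟩
  neg_mem' := by
    rintro a ⟨s, t, hs, ht, rfl⟩
    exact ⟨t, s, ht, hs, by ring⟩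

theorem cycDiff_of_dvd' {X : Type*} {R : X → X → Prop}
    (hsc : ∀ x y : X, ∃ n : ℕ, 1 ≤ n ∧ relPow R n x y) {q : ℕ}
    (hqmax : ∀ d : ℕ, (∀ n : ℕ, 1 ≤ n → (∃ x, relPow R n x x) → d ∣ n) → d ∣ q)
    (y : X) {n : ℕ} (hn : q ∣ n) :
    ∃ s t : ℕ, relPow R s y y ∧ relPow R t y y ∧ n + s = t := by
  obtain ⟨g, hg⟩ := Int.subgroup_cyclic (cycDiff' R y)
  have hmem : ∀ z : ℤ, z ∈ cycDiff' R y ↔ g ∣ z := by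
    intro z
    rw [hg, ← AddSubgroup.zmultiples_eq_closure, Int.mem_zmultiples_iff]
  have hgq : g.natAbs ∣ q := by
    apply hqmax
    rintro m - ⟨x, hx⟩
    obtain ⟨a, -, ha⟩ := hsc y x
    obtain ⟨b, -, hb⟩ := hsc x y
    have : (m : ℤ) ∈ cycDiff' R y :=
      ⟨a + b, a + m + b, relPow_add'_s14 ha hb, relPow_add'_s14 (relPow_add'_s14 ha hx) hb,
        by push_cast; ring⟩
    rw [hmem] at this
    exact Int.natAbs_dvd_natAbs.mpr this
  have : (n : ℤ) ∈ cycDiff' R y := by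
    rw [hmem]
    exact Int.natAbs_dvd.mp (Int.natCast_dvd_natCast.mpr (hgq.trans hn))
  obtain ⟨s, t, hs, ht, e⟩ := this
  exact ⟨s, t, hs, ht, by omega⟩

theorem stmt14 {X : Type*} [Fintype X] [Nonempty X] (R : X → X → Prop)
    (hsc : ∀ x y : X, ∃ n : ℕ, 1 ≤ n ∧ relPow R n x y)
    (j : ℕ) (hj : 1 ≤ j)
    (hjper : ∃ p : ℕ, 1 ≤ p ∧ relPow R j = relPow R (j + p))
    (hjleast : ∀ j' : ℕ, 1 ≤ j' → (∃ p : ℕ, 1 ≤ p ∧ relPow R j' = relPow R (j' + p)) → j ≤ j')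
    (q : ℕ) (hq : 1 ≤ q)
    (hqdvd : ∀ n : ℕ, 1 ≤ n → (∃ x, relPow R n x x) → q ∣ n)
    (hqmax : ∀ d : ℕ, (∀ n : ℕ, 1 ≤ n → (∃ x, relPow R n x x) → d ∣ n) → d ∣ q) :
    (∀ x y : X, (∀ n : ℕ, relPow R n x y → q ∣ n) ↔
      Relation.ReflTransGen (fun a b => ∃ z, relPow R j a z ∧ relPow R j b z) x y) ∧
    (∃ f : X → Fin q, Function.Surjective f ∧
      ∀ x y : X, f x = f y ↔ (∀ n : ℕ, relPow R n x y → q ∣ n)) := by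
  obtain ⟨x₀⟩ := ‹Nonempty X›
  have hcyc : ∀ n x, relPow R n x x → q ∣ n := by
    intro n x h
    rcases Nat.eq_zero_or_pos n with rfl | h0
    · exact dvd_zero q
    · exact hqdvd n h0 ⟨x, h⟩
  have hcongr : ∀ {m n x y}, relPow R m x y → relPow R n x y → m ≡ n [MOD q] := by
    intro m n x y h1 h2
    obtain ⟨r, -, hr⟩ := hsc y x
    have a := hcyc _ _ (relPow_add'_s14 h1 hr)
    have b := hcyc _ _ (relPow_add'_s14 h2 hr)
    exact Nat.ModEq.add_right_cancel' r
      (((Nat.modEq_zero_iff_dvd).mpr a).trans ((Nat.modEq_zero_iff_dvd).mpr b).symm)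
  choose d _ hd using hsc x₀
  have hstep : ∀ {n x y}, relPow R n x y → d x + n ≡ d y [MOD q] := fun h =>
    hcongr (relPow_add'_s14 (hd _) h) (hd _)
  have hiff : ∀ x y : X, d x ≡ d y [MOD q] ↔ (∀ n : ℕ, relPow R n x y → q ∣ n) := by
    intro x y
    constructor
    · intro h n hn
      have h2 : d x + n ≡ d x + 0 [MOD q] := (hstep hn).trans h.symm
      exact (Nat.modEq_zero_iff_dvd).mp (Nat.ModEq.add_left_cancel' _ h2)
    · intro h
      obtain ⟨n, -, hn⟩ := hsc x y
      have h2 : d x + n ≡ d x + 0 [MOD q] :=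
        Nat.ModEq.add_left _ ((Nat.modEq_zero_iff_dvd).mpr (h n hn))
      exact h2.symm.trans (hstep hn)
  refine ⟨fun x y => ⟨fun h => ?_, fun h => ?_⟩, ?_⟩
  · obtain ⟨p, hp, hper⟩ := hjper
    obtain ⟨n, -, hn⟩ := hsc x y
    obtain ⟨s, t, hs, ht, e⟩ := cycDiff_of_dvd' hsc hqmax y (h n hn)
    have hx := relPow_add'_s14 hn hs
    rw [e] at hx
    obtain ⟨l, hl⟩ : ∃ l, j + t * p = t + l :=
      Nat.exists_eq_add_of_le ((Nat.le_mul_of_pos_right t hp).trans (Nat.le_add_left _ _))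
    obtain ⟨z, hz⟩ := relPow_total' hsc l y
    refine Relation.ReflTransGen.single ⟨z, ?_, ?_⟩
    · exact relPow_periodic' hper t (hl ▸ relPow_add'_s14 hx hz)
    · exact relPow_periodic' hper t (hl ▸ relPow_add'_s14 ht hz)
  · rw [← hiff]
    induction h with
    | refl => exact Nat.ModEq.refl _
    | tail _ hbc ih =>
      obtain ⟨z, h1, h2⟩ := hbc
      exact ih.trans (Nat.ModEq.add_right_cancel' j ((hstep h1).trans (hstep h2).symm))
  · refine ⟨fun x => ⟨d x % q, Nat.mod_lt _ hq⟩, ?_, ?_⟩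
    · rintro ⟨k, hk⟩
      obtain ⟨y, hy⟩ := relPow_total' hsc k x₀
      refine ⟨y, Fin.ext ?_⟩
      have : d y % q = k % q := hcongr (hd y) hy
      simpa [Nat.mod_eq_of_lt hk] using this
    · intro x y
      rw [← hiff, Fin.mk.injEq]
      rfl
end

section
/- Let R be a strongly connected self-relation on a finite set X and let q ≥ 1 divide the length of every cycle of R (i.e. for every n ≥ 1, if there exists x with R^n x x then q ∣ n). Then any two walks between the same pair of points have congruent lengths modulo q: for all x, y ∈ X and all m, n ≥ 1, if R^m x y and R^n x y then m ≡ n (mod q). -/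
theorem relPow_trans_aux {X : Type*} (R : X → X → Prop) (a : ℕ) (x y : X)
    (h : relPow R a x y) : ∀ (b : ℕ) (z : X), relPow R b y z → relPow R (a + b) x z := by
  intro b
  induction b with
  | zero =>
    intro z hz
    have hz' : y = z := hz
    subst hz'
    exact h
  | succ b ih =>
    rintro z ⟨w, hw, hr⟩
    exact ⟨w, ih w hw, hr⟩

theorem stmt15 {X : Type*} [Fintype X] (R : X → X → Prop)
    (hsc : ∀ x y : X, ∃ n : ℕ, 1 ≤ n ∧ relPow R n x y)
    (q : ℕ) (hq : 1 ≤ q)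
    (hqdvd : ∀ n : ℕ, 1 ≤ n → (∃ x, relPow R n x x) → q ∣ n) :
    ∀ x y : X, ∀ m n : ℕ, 1 ≤ m → 1 ≤ n →
      relPow R m x y → relPow R n x y → m ≡ n [MOD q] := by
  intro x y m n hm hn h1 h2
  obtain ⟨k, hk, h3⟩ := hsc y x
  have e1 := hqdvd (m + k) (by omega) ⟨x, relPow_trans_aux R m x y h1 k x h3⟩
  have e2 := hqdvd (n + k) (by omega) ⟨x, relPow_trans_aux R n x y h2 k x h3⟩
  have e3 : m + k ≡ n + k [MOD q] :=
    ((Nat.modEq_zero_iff_dvd).2 e1).trans ((Nat.modEq_zero_iff_dvd).2 e2).symm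
  exact Nat.ModEq.add_right_cancel' k e3
end
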